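/- arXiv:2110.09869 — 2 statements merged into one kernel-verified Lean document; each statement's English description precedes it below -/
import Mathlib

section
/- Let ℓ be a loss function that is symmetric (ℓ(a,b)=ℓ(b,a)), bounded in [0,B], and satisfies the triangle inequality (ℓ(a,c) ≤ ℓ(a,b)+ℓ(b,c)). Let P and Q be probability measures on X × Y with X-marginals P_X and Q_X, and let F be a class of measurable functions from X to Ŷ. Then for every f ∈ F, E_{(x,y)∼P}[ℓ(f(x),y)] ≤ E_{(x,y)∼Q}[ℓ(f(x),y)] + d_F(P_X,Q_X) + λ, where λ = inf_{g∈F} ( E_{(x,y)∼P}[ℓ(g(x),y)] + E_{(x,y)∼Q}[ℓ(g(x),y)] ). -/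
open MeasureTheory

/-- The discrepancy distance between two measures `P` and `Q` on `X`, relative to a
function class `F : Set (X → Yhat)` and a loss `ℓ : Yhat → Yhat → ℝ`:
`d_F(P,Q) = sup_{f,f'∈F} |E_{x∼P}[ℓ(f x, f' x)] − E_{x∼Q}[ℓ(f x, f' x)]|`. -/
noncomputable def discrepancy {X Yhat : Type*} [MeasurableSpace X]
    (F : Set (X → Yhat)) (ℓ : Yhat → Yhat → ℝ) (P Q : Measure X) : ℝ :=
  sSup {d : ℝ | ∃ f ∈ F, ∃ f' ∈ F,
    d = |(∫ x, ℓ (f x) (f' x) ∂P) - ∫ x, ℓ (f x) (f' x) ∂Q|}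

/-- For a symmetric loss `ℓ`, bounded in `[0,B]` and satisfying the triangle inequality,
the risk of any `f ∈ F` under `P` is at most its risk under `Q`, plus the discrepancy
distance between the `X`-marginals, plus `λ = inf_{g∈F} (risk_P(g) + risk_Q(g))`. -/
theorem risk_le_risk_add_discrepancy_add_lambda
    {X Yhat : Type*} [MeasurableSpace X] [MeasurableSpace Yhat]
    (B : ℝ) (ℓ : Yhat → Yhat → ℝ)
    (hsymm : ∀ a b, ℓ a b = ℓ b a)
    (hbound : ∀ a b, ℓ a b ∈ Set.Icc 0 B)
    (htri : ∀ a b c, ℓ a c ≤ ℓ a b + ℓ b c)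
    (hℓmeas : Measurable fun p : Yhat × Yhat => ℓ p.1 p.2)
    (F : Set (X → Yhat)) (hF : ∀ f ∈ F, Measurable f)
    (P Q : Measure (X × Yhat)) [IsProbabilityMeasure P] [IsProbabilityMeasure Q]
    (f : X → Yhat) (hf : f ∈ F) :
    (∫ z, ℓ (f z.1) z.2 ∂P) ≤
      (∫ z, ℓ (f z.1) z.2 ∂Q)
        + discrepancy F ℓ (P.map Prod.fst) (Q.map Prod.fst)
        + sInf {r : ℝ | ∃ g ∈ F,
            r = (∫ z, ℓ (g z.1) z.2 ∂P) + ∫ z, ℓ (g z.1) z.2 ∂Q} := by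
  have hint : ∀ (ν : Measure (X × Yhat)) [IsProbabilityMeasure ν]
      (u v : X × Yhat → Yhat), Measurable u → Measurable v →
      Integrable (fun z => ℓ (u z) (v z)) ν := by
    intro ν _ u v hu hv
    refine Integrable.of_bound (C := B)
      (hℓmeas.comp (hu.prodMk hv)).aestronglyMeasurable (Filter.Eventually.of_forall fun z => ?_)
    rw [Real.norm_eq_abs, abs_of_nonneg (hbound _ _).1]
    exact (hbound _ _).2
  have hmap : ∀ (ν : Measure (X × Yhat)) (u v : X → Yhat), Measurable u → Measurable v →
      (∫ x, ℓ (u x) (v x) ∂(ν.map Prod.fst)) = ∫ z, ℓ (u z.1) (v z.1) ∂ν := by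
    intro ν u v hu hv
    exact integral_map measurable_fst.aemeasurable
      (hℓmeas.comp (hu.prodMk hv)).aestronglyMeasurable
  have hrange : ∀ (ν : Measure (X × Yhat)) [IsProbabilityMeasure ν] (u v : X → Yhat),
      Measurable u → Measurable v →
      0 ≤ (∫ z, ℓ (u z.1) (v z.1) ∂ν) ∧ (∫ z, ℓ (u z.1) (v z.1) ∂ν) ≤ B := by
    intro ν _ u v hu hv
    refine ⟨integral_nonneg fun z => (hbound _ _).1, ?_⟩
    have h := integral_mono (hint ν (fun z => u z.1) (fun z => v z.1)
      (hu.comp measurable_fst) (hv.comp measurable_fst)) (integrable_const B)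
      (fun z => (hbound _ _).2)
    simpa using h
  have hkey : ∀ g ∈ F, (∫ z, ℓ (f z.1) z.2 ∂P) - (∫ z, ℓ (f z.1) z.2 ∂Q)
      - discrepancy F ℓ (P.map Prod.fst) (Q.map Prod.fst)
      ≤ (∫ z, ℓ (g z.1) z.2 ∂P) + ∫ z, ℓ (g z.1) z.2 ∂Q := by
    intro g hg
    have hfm : Measurable (fun z : X × Yhat => f z.1) := (hF f hf).comp measurable_fst
    have hgm : Measurable (fun z : X × Yhat => g z.1) := (hF g hg).comp measurable_fst
    have hd : |(∫ x, ℓ (f x) (g x) ∂(P.map Prod.fst)) - ∫ x, ℓ (f x) (g x) ∂(Q.map Prod.fst)|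
        ≤ discrepancy F ℓ (P.map Prod.fst) (Q.map Prod.fst) := by
      refine le_csSup ⟨B, ?_⟩ ⟨f, hf, g, hg, rfl⟩
      rintro _ ⟨u, hu, v, hv, rfl⟩
      rw [hmap P u v (hF u hu) (hF v hv), hmap Q u v (hF u hu) (hF v hv), abs_le]
      have h1 := hrange P u v (hF u hu) (hF v hv)
      have h2 := hrange Q u v (hF u hu) (hF v hv)
      constructor <;> linarith [h1.1, h1.2, h2.1, h2.2]
    rw [hmap P f g (hF f hf) (hF g hg), hmap Q f g (hF f hf) (hF g hg)] at hd
    have hd' := (le_abs_self _).trans hd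
    have i1 := hint P (fun z => f z.1) (fun z => g z.1) hfm hgm
    have i2 := hint P (fun z => g z.1) (fun z => z.2) hgm measurable_snd
    have i3 := hint P (fun z => f z.1) (fun z => z.2) hfm measurable_snd
    have j1 := hint Q (fun z => f z.1) (fun z => g z.1) hfm hgm
    have j2 := hint Q (fun z => g z.1) (fun z => z.2) hgm measurable_snd
    have j3 := hint Q (fun z => f z.1) (fun z => z.2) hfm measurable_snd
    have hP : (∫ z, ℓ (f z.1) z.2 ∂P) ≤ ∫ z, (ℓ (f z.1) (g z.1) + ℓ (g z.1) z.2) ∂P :=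
      integral_mono i3 (i1.add i2) fun z => htri _ _ _
    have hQ : (∫ z, ℓ (f z.1) (g z.1) ∂Q) ≤ ∫ z, (ℓ (f z.1) z.2 + ℓ (g z.1) z.2) ∂Q :=
      integral_mono j1 (j3.add j2) fun z => by
        have := htri (f z.1) z.2 (g z.1)
        rw [hsymm z.2 (g z.1)] at this
        exact this
    rw [integral_add i1 i2] at hP
    rw [integral_add j3 j2] at hQ
    linarith
  have hinf := le_csInf (s := {r : ℝ | ∃ g ∈ F,
      r = (∫ z, ℓ (g z.1) z.2 ∂P) + ∫ z, ℓ (g z.1) z.2 ∂Q}) ⟨_, f, hf, rfl⟩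
    (by rintro _ ⟨g, hg, rfl⟩; exact hkey g hg)
  linarith
end

section
/- Let ℓ be a loss function that is symmetric, bounded in [0,B], and satisfies the triangle inequality. Let P_1,…,P_m be probability measures on X × Y, let i ∈ {1,…,m}, and let w_1,…,w_m be nonnegative weights summing to 1, with P_w = Σ_{j=1}^m w_j P_j the mixture distribution. Then for every f ∈ F, E_{(x,y)∼P_i}[ℓ(f(x),y)] ≤ E_{(x,y)∼P_w}[ℓ(f(x),y)] + Σ_{j=1}^m w_j d_F((P_i)_X,(P_j)_X) + λ, where λ = inf_{g∈F} ( E_{(x,y)∼P_i}[ℓ(g(x),y)] + E_{(x,y)∼P_w}[ℓ(g(x),y)] ) and (P)_X denotes the X-marginal of P. -/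
open MeasureTheory

/-- For a symmetric loss bounded in `[0,B]` satisfying the triangle inequality, the risk
of any `f ∈ F` under the target `P i` is bounded by its risk under the mixture
`P_w = Σ_j w_j P_j`, plus the weighted sum of discrepancies between marginals, plus
`λ = inf_{g∈F} (risk_{P_i}(g) + risk_{P_w}(g))`. -/
theorem risk_le_mixture_risk_add_weighted_discrepancy
    {X Yhat : Type*} [MeasurableSpace X] [MeasurableSpace Yhat]
    (B : ℝ) (ℓ : Yhat → Yhat → ℝ)
    (hsymm : ∀ a b, ℓ a b = ℓ b a)
    (hbound : ∀ a b, ℓ a b ∈ Set.Icc 0 B)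
    (htri : ∀ a b c, ℓ a c ≤ ℓ a b + ℓ b c)
    (hℓmeas : Measurable fun p : Yhat × Yhat => ℓ p.1 p.2)
    (F : Set (X → Yhat)) (hF : ∀ f ∈ F, Measurable f)
    (m : ℕ) (P : Fin m → Measure (X × Yhat)) [∀ j, IsProbabilityMeasure (P j)]
    (i : Fin m)
    (w : Fin m → ℝ) (hw : ∀ j, 0 ≤ w j) (hw1 : ∑ j, w j = 1)
    (f : X → Yhat) (hf : f ∈ F) :
    (∫ z, ℓ (f z.1) z.2 ∂(P i)) ≤
      (∫ z, ℓ (f z.1) z.2 ∂(∑ j, ENNReal.ofReal (w j) • P j))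
        + (∑ j, w j * discrepancy F ℓ ((P i).map Prod.fst) ((P j).map Prod.fst))
        + sInf {r : ℝ | ∃ g ∈ F,
            r = (∫ z, ℓ (g z.1) z.2 ∂(P i))
              + ∫ z, ℓ (g z.1) z.2 ∂(∑ j, ENNReal.ofReal (w j) • P j)} := by
  have hm2 : ∀ g ∈ F, Measurable fun z : X × Yhat => ℓ (g z.1) z.2 := fun g hg =>
    hℓmeas.comp (((hF g hg).comp measurable_fst).prodMk measurable_snd)
  have hm1 : ∀ g ∈ F, ∀ g' ∈ F, Measurable fun x : X => ℓ (g x) (g' x) := fun g hg g' hg' =>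
    hℓmeas.comp ((hF g hg).prodMk (hF g' hg'))
  have hm3 : ∀ g ∈ F, ∀ g' ∈ F, Measurable fun z : X × Yhat => ℓ (g z.1) (g' z.1) :=
    fun g hg g' hg' => (hm1 g hg g' hg').comp measurable_fst
  have hb : ∀ a b, ‖ℓ a b‖ ≤ B := fun a b => by
    rw [Real.norm_eq_abs, abs_of_nonneg (hbound a b).1]
    exact (hbound a b).2
  have hi2 : ∀ g ∈ F, ∀ j, Integrable (fun z : X × Yhat => ℓ (g z.1) z.2) (P j) :=
    fun g hg j => Integrable.of_bound (hm2 g hg).aestronglyMeasurable B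
      (Filter.Eventually.of_forall fun z => hb _ _)
  have hi3 : ∀ g ∈ F, ∀ g' ∈ F, ∀ j,
      Integrable (fun z : X × Yhat => ℓ (g z.1) (g' z.1)) (P j) :=
    fun g hg g' hg' j => Integrable.of_bound (hm3 g hg g' hg').aestronglyMeasurable B
      (Filter.Eventually.of_forall fun z => hb _ _)
  have hmix : ∀ g ∈ F, (∫ z, ℓ (g z.1) z.2 ∂(∑ j, ENNReal.ofReal (w j) • P j))
      = ∑ j, w j * ∫ z, ℓ (g z.1) z.2 ∂(P j) := by
    intro g hg
    rw [integral_finset_sum_measure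
      (fun j _ => (hi2 g hg j).smul_measure ENNReal.ofReal_ne_top)]
    refine Finset.sum_congr rfl fun j _ => ?_
    rw [integral_smul_measure, ENNReal.toReal_ofReal (hw j), smul_eq_mul]
  have hmap : ∀ g ∈ F, ∀ g' ∈ F, ∀ j, (∫ x, ℓ (g x) (g' x) ∂((P j).map Prod.fst))
      = ∫ z, ℓ (g z.1) (g' z.1) ∂(P j) := fun g hg g' hg' j =>
    integral_map measurable_fst.aemeasurable (hm1 g hg g' hg').aestronglyMeasurable
  have hI : ∀ g ∈ F, ∀ g' ∈ F, ∀ j, (∫ z, ℓ (g z.1) (g' z.1) ∂(P j)) ∈ Set.Icc 0 B := by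
    intro g hg g' hg' j
    refine ⟨integral_nonneg fun z => (hbound _ _).1, ?_⟩
    have := integral_mono (hi3 g hg g' hg' j) (integrable_const B)
      (fun z => (hbound (g z.1) (g' z.1)).2)
    simpa using this
  have hd : ∀ g ∈ F, ∀ j, (∫ z, ℓ (f z.1) (g z.1) ∂(P i)) ≤ (∫ z, ℓ (f z.1) (g z.1) ∂(P j))
      + discrepancy F ℓ ((P i).map Prod.fst) ((P j).map Prod.fst) := by
    intro g hg j
    have : |(∫ z, ℓ (f z.1) (g z.1) ∂(P i)) - ∫ z, ℓ (f z.1) (g z.1) ∂(P j)|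
        ≤ discrepancy F ℓ ((P i).map Prod.fst) ((P j).map Prod.fst) := by
      refine le_csSup ⟨B, ?_⟩ ⟨f, hf, g, hg, ?_⟩
      · rintro d ⟨a, ha, b, hb', rfl⟩
        rw [hmap a ha b hb', hmap a ha b hb', abs_le]
        have h1 := hI a ha b hb' i
        have h2 := hI a ha b hb' j
        constructor <;> linarith [h1.1, h1.2, h2.1, h2.2]
      · rw [hmap f hf g hg, hmap f hf g hg]
    linarith [le_abs_self ((∫ z, ℓ (f z.1) (g z.1) ∂(P i)) - ∫ z, ℓ (f z.1) (g z.1) ∂(P j))]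
  rw [← sub_le_iff_le_add']
  refine le_csInf ⟨_, f, hf, rfl⟩ ?_
  rintro r ⟨g, hg, rfl⟩
  rw [hmix f hf, hmix g hg]
  have h1 : (∫ z, ℓ (f z.1) z.2 ∂(P i)) ≤
      (∫ z, ℓ (f z.1) (g z.1) ∂(P i)) + ∫ z, ℓ (g z.1) z.2 ∂(P i) := by
    rw [← integral_add (hi3 f hf g hg i) (hi2 g hg i)]
    exact integral_mono (hi2 f hf i) ((hi3 f hf g hg i).add (hi2 g hg i))
      (fun z => htri _ _ _)
  have h2 : ∀ j, (∫ z, ℓ (f z.1) (g z.1) ∂(P j)) ≤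
      (∫ z, ℓ (f z.1) z.2 ∂(P j)) + ∫ z, ℓ (g z.1) z.2 ∂(P j) := by
    intro j
    rw [← integral_add (hi2 f hf j) (hi2 g hg j)]
    refine integral_mono (hi3 f hf g hg j) ((hi2 f hf j).add (hi2 g hg j)) (fun z => ?_)
    have := htri (f z.1) z.2 (g z.1)
    rw [hsymm z.2 (g z.1)] at this
    exact this
  have h3 : (∫ z, ℓ (f z.1) (g z.1) ∂(P i)) ≤
      ∑ j, w j * ((∫ z, ℓ (f z.1) z.2 ∂(P j)) + (∫ z, ℓ (g z.1) z.2 ∂(P j))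
        + discrepancy F ℓ ((P i).map Prod.fst) ((P j).map Prod.fst)) := by
    calc (∫ z, ℓ (f z.1) (g z.1) ∂(P i))
        = ∑ j, w j * (∫ z, ℓ (f z.1) (g z.1) ∂(P i)) := by
          rw [← Finset.sum_mul, hw1, one_mul]
      _ ≤ _ := Finset.sum_le_sum fun j _ =>
          mul_le_mul_of_nonneg_left (by linarith [hd g hg j, h2 j]) (hw j)
  simp only [mul_add, Finset.sum_add_distrib] at h3
  linarith
end
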